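/- arXiv:1805.11701 — 2 statements merged into one kernel-verified Lean document; each statement's English description precedes it below -/
import Mathlib

section
/- Let p₀, p₁, σ be positive real numbers and define ψ(ω) = (σ⁴/ω²)·sin²(ω) + 2p₀p₁·cos(ω) for ω ∈ (0, π). Then ψ is strictly decreasing on (0, π), the limit of ψ(ω) as ω → 0⁺ equals σ⁴ + 2p₀p₁, and ψ(π) = −2p₀p₁ < 0. -/
/-!
Since `sin ω / ω` is the slope of the chord of the sine graph from `0` to `ω`, strict concavity of
`sin` on `[0, π]` makes `sinc` strictly decreasing there, with no derivative of `ψ` to sign.  Away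
from `0`, `ψ ω = σ⁴ sinc² ω + 2p₀p₁ cos ω`, whose right-hand side is a sum of decreasing functions
on `[0, π]` and is continuous at `0`.
-/

open Real Set Filter Topology

lemma sinc_nonneg_of_nonneg_of_le_pi {x : ℝ} (hx₀ : 0 ≤ x) (hxπ : x ≤ π) : 0 ≤ sinc x := by
  rcases hx₀.eq_or_lt with rfl | hx_pos
  · simp
  · rw [sinc_of_ne_zero hx_pos.ne']
    exact div_nonneg (sin_nonneg_of_nonneg_of_le_pi hx₀ hxπ) hx₀

lemma strictAntiOn_sinc_Icc : StrictAntiOn sinc (Icc 0 π) := by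
  intro x hx y hy hxy
  have hy_pos : 0 < y := hx.1.trans_lt hxy
  rcases hx.1.eq_or_lt with rfl | hx_pos
  · rw [sinc_zero, sinc_of_ne_zero hy_pos.ne', div_lt_one hy_pos]
    exact sin_lt hy_pos
  · have chord_slope_lt : (sin y - sin 0) / (y - 0) < (sin x - sin 0) / (x - 0) :=
      strictConcaveOn_sin_Icc.secant_strict_mono (left_mem_Icc.2 pi_nonneg) hx hy
        hx_pos.ne' hy_pos.ne' hxy
    simpa only [sin_zero, sub_zero, sinc_of_ne_zero hx_pos.ne', sinc_of_ne_zero hy_pos.ne']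
      using chord_slope_lt

lemma strictAntiOn_mul_sinc_pow_add_mul_cos {a b : ℝ} (ha : 0 ≤ a) (hb : 0 < b) (n : ℕ) :
    StrictAntiOn (fun x ↦ a * sinc x ^ n + b * cos x) (Icc 0 π) := by
  intro x hx y hy hxy
  have sinc_pow_le : sinc y ^ n ≤ sinc x ^ n :=
    pow_le_pow_left₀ (sinc_nonneg_of_nonneg_of_le_pi hy.1 hy.2)
      (strictAntiOn_sinc_Icc hx hy hxy).le n
  have cos_lt : cos y < cos x := strictAntiOn_cos hx hy hxy
  exact add_lt_add_of_le_of_lt (mul_le_mul_of_nonneg_left sinc_pow_le ha)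
    (mul_lt_mul_of_pos_left cos_lt hb)

lemma tendsto_mul_sinc_pow_add_mul_cos_zero (a b : ℝ) (n : ℕ) :
    Tendsto (fun x ↦ a * sinc x ^ n + b * cos x) (𝓝 0) (𝓝 (a + b)) := by
  have h_cont : Continuous fun x ↦ a * sinc x ^ n + b * cos x := by fun_prop
  simpa only [sinc_zero, cos_zero, one_pow, mul_one] using h_cont.tendsto 0

lemma div_pow_mul_sin_pow_eq_mul_sinc_pow {x : ℝ} (hx : x ≠ 0) (a : ℝ) (n : ℕ) :
    a / x ^ n * sin x ^ n = a * sinc x ^ n := by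
  rw [sinc_of_ne_zero hx, div_pow, div_mul_eq_mul_div, mul_div_assoc]

/-- Let `p₀, p₁, σ` be positive reals and
`ψ ω = (σ⁴/ω²) sin²ω + 2p₀p₁ cos ω` on `(0, π)`.  Then `ψ` is strictly decreasing on
`(0, π)`, `ψ ω → σ⁴ + 2p₀p₁` as `ω → 0⁺`, and `ψ π = −2p₀p₁ < 0`. -/
theorem stmt_14 (p₀ p₁ σ : ℝ) (h0 : 0 < p₀) (h1 : 0 < p₁) (hσ : 0 < σ)
    (ψ : ℝ → ℝ)
    (hψ : ∀ ω : ℝ, ψ ω = σ ^ 4 / ω ^ 2 * Real.sin ω ^ 2 + 2 * p₀ * p₁ * Real.cos ω) :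
    StrictAntiOn ψ (Set.Ioo 0 Real.pi) ∧
    Filter.Tendsto ψ (nhdsWithin 0 (Set.Ioi 0)) (nhds (σ ^ 4 + 2 * p₀ * p₁)) ∧
    ψ Real.pi = -(2 * p₀ * p₁) ∧ -(2 * p₀ * p₁) < 0 := by
  have cos_coeff_pos : 0 < 2 * p₀ * p₁ := by positivity
  have eqOn_sinc : EqOn (fun ω ↦ σ ^ 4 * sinc ω ^ 2 + 2 * p₀ * p₁ * cos ω) ψ (Ioi 0) := by
    intro ω hω
    rw [hψ, div_pow_mul_sin_pow_eq_mul_sinc_pow (ne_of_gt hω)]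
  refine ⟨?_, ?_, ?_, neg_lt_zero.2 cos_coeff_pos⟩
  · exact ((strictAntiOn_mul_sinc_pow_add_mul_cos (by positivity) cos_coeff_pos 2).mono
      Ioo_subset_Icc_self).congr (eqOn_sinc.mono Ioo_subset_Ioi_self)
  · exact ((tendsto_mul_sinc_pow_add_mul_cos_zero (σ ^ 4) (2 * p₀ * p₁) 2).mono_left
      nhdsWithin_le_nhds).congr' eqOn_sinc.eventuallyEq_nhdsWithin
  · simp [hψ]
end

section
/- Let σ be a real number, ε a nonzero real number, and let P_t and Π_t be differentiable symmetric-n×n-matrix-valued functions on an open interval J satisfying dP_t/dt = −((1+ε)/(2ε))(Π_t P_t² + P_t² Π_t) + ((1−ε)/ε) P_t Π_t P_t + σ² I and dΠ_t/dt = ((1+ε)/(2ε))(Π_t² P_t + P_t Π_t²) − ((1−ε)/ε) Π_t P_t Π_t on J. Then the commutator P_t Π_t − Π_t P_t is constant on J, i.e. its derivative vanishes for all t ∈ J. Consequently the antisymmetric part (1/(2ε))(P_t Π_t − Π_t P_t) of the optimal system matrix A_t = −(1/2)(Π_t P_t + P_t Π_t) + (1/(2ε))(P_t Π_t − Π_t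 P_t) is constant. -/
open Matrix

/-!
For matrices, the stationarity equations are Hamilton's equations `P' = ∂H/∂Q`, `Q' = -∂H/∂P` of
`H = -c tr (P² Q²) + (d / 2) tr (P Q P Q) + r tr Q`, which is invariant under the simultaneous
conjugation `(P, Q) ↦ (g P g⁻¹, g Q g⁻¹)`. The commutator `P Q - Q P` is the moment map of this
symmetry, so it is conserved by Noether's theorem. Algebraically, each of the three terms of `H`
contributes zero to `⁅P', Q⁆ + ⁅P, Q'⁆`.
-/

section Algebra

attribute [local instance] LieRing.ofAssociativeRing

variable {R A : Type*} [CommRing R] [Ring A] [Algebra R A]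

/-- The right-hand side of the covariance equation of the steering problem in an associative
algebra, with `Q` standing for the multiplier `Π`. The paper's coefficients are
`c = (1 + ε) / (2 ε)`, `d = (1 - ε) / ε` and `r = σ²`. -/
def covarianceRate (c d r : R) (P Q : A) : A :=
  (-c) • (Q * P ^ 2 + P ^ 2 * Q) + d • (P * Q * P) + r • (1 : A)

/-- The right-hand side of the equation for the multiplier `Π`, written `Q`, with the same
coefficients `c` and `d` as in `covarianceRate`. -/
def multiplierRate (c d : R) (P Q : A) : A :=
  c • (Q ^ 2 * P + P * Q ^ 2) - d • (Q * P * Q)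

theorem lie_mul_sq_add_sq_mul (P Q : A) :
    ⁅Q * P ^ 2 + P ^ 2 * Q, Q⁆ = ⁅P, Q ^ 2 * P + P * Q ^ 2⁆ := by
  simp only [Ring.lie_def]
  noncomm_ring

theorem lie_mul_mul_self (P Q : A) : ⁅P * Q * P, Q⁆ = ⁅P, Q * P * Q⁆ := by
  simp only [Ring.lie_def, mul_assoc]

theorem lie_covarianceRate_add_lie_multiplierRate (c d r : R) (P Q : A) :
    ⁅covarianceRate c d r P Q, Q⁆ + ⁅P, multiplierRate c d P Q⁆ = 0 := by
  have lie_one : ⁅(1 : A), Q⁆ = 0 := (Commute.one_left Q).lie_eq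
  rw [covarianceRate, multiplierRate, add_lie, add_lie, lie_sub, smul_lie, smul_lie, smul_lie,
    LieAlgebra.lie_smul, LieAlgebra.lie_smul, lie_mul_sq_add_sq_mul, lie_mul_mul_self, lie_one]
  module

end Algebra

section Calculus

variable {𝕜 : Type*} [NontriviallyNormedField 𝕜]

theorem hasDerivAt_matrix_iff {m n F : Type*} [Finite m] [Finite n] [NormedAddCommGroup F]
    [NormedSpace 𝕜 F] {M : 𝕜 → Matrix m n F} {M' : Matrix m n F} {t : 𝕜} :
    HasDerivAt M M' t ↔ ∀ i j, HasDerivAt (fun s => M s i j) (M' i j) t := by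
  have := Fintype.ofFinite m
  have := Fintype.ofFinite n
  exact (hasDerivAt_pi (φ := M)).trans
    (forall_congr' fun i => hasDerivAt_pi (φ := fun s => M s i))

variable {A : Type*} [NormedRing A] [NormedAlgebra 𝕜 A] {P Q : 𝕜 → A} {t : 𝕜}

theorem hasDerivAt_lie {P' Q' : A} (hP : HasDerivAt P P' t) (hQ : HasDerivAt Q Q' t) :
    HasDerivAt (fun s => ⁅P s, Q s⁆) (⁅P', Q t⁆ + ⁅P t, Q'⁆) t := by
  have leibniz := (hP.fun_mul hQ).fun_sub (hQ.fun_mul hP)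
  simp only [Ring.lie_def]
  convert! leibniz using 1
  abel

theorem hasDerivAt_lie_zero_of_stationary {c d r : 𝕜}
    (hP : HasDerivAt P (covarianceRate c d r (P t) (Q t)) t)
    (hQ : HasDerivAt Q (multiplierRate c d (P t) (Q t)) t) :
    HasDerivAt (fun s => ⁅P s, Q s⁆) 0 t := by
  simpa only [lie_covarianceRate_add_lie_multiplierRate] using hasDerivAt_lie hP hQ

end Calculus

theorem stmt_17_general {𝕜 A : Type*} [RCLike 𝕜] [NormedRing A] [NormedAlgebra 𝕜 A]
    {J : Set 𝕜} (hJ_open : IsOpen J) (hJ_conn : IsPreconnected J) {c d r : 𝕜 → 𝕜} {P Q : 𝕜 → A}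
    (hP : ∀ t ∈ J, HasDerivAt P (covarianceRate (c t) (d t) (r t) (P t) (Q t)) t)
    (hQ : ∀ t ∈ J, HasDerivAt Q (multiplierRate (c t) (d t) (P t) (Q t)) t) :
    (∀ t ∈ J, HasDerivAt (fun s => ⁅P s, Q s⁆) 0 t) ∧
      ∀ s ∈ J, ∀ t ∈ J, ⁅P s, Q s⁆ = ⁅P t, Q t⁆ := by
  have hderiv : ∀ t ∈ J, HasDerivAt (fun s => ⁅P s, Q s⁆) 0 t := fun t ht =>
    hasDerivAt_lie_zero_of_stationary (hP t ht) (hQ t ht)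
  refine ⟨hderiv, fun s hs t ht => ?_⟩
  exact hJ_open.is_const_of_deriv_eq_zero hJ_conn
    (fun u hu => (hderiv u hu).differentiableAt.differentiableWithinAt)
    (fun u hu => (hderiv u hu).deriv) hs ht

/-- Under the same stationarity equations as in Statement 16 (with `Π`
written `Q`), the commutator `P Π − Π P` has vanishing (entrywise) derivative on the open
interval `J = (a,b)`, and consequently the antisymmetric part `(1/(2ε))(P Π − Π P)` of the
optimal system matrix `A = −(1/2)(Π P + P Π) + (1/(2ε))(P Π − Π P)` is constant on `J`. -/
theorem stmt_17 (n : ℕ) (σ ε a b : ℝ) (hε : ε ≠ 0)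
    (P Q : ℝ → Matrix (Fin n) (Fin n) ℝ)
    (hPsymm : ∀ t ∈ Set.Ioo a b, (P t).IsSymm)
    (hQsymm : ∀ t ∈ Set.Ioo a b, (Q t).IsSymm)
    (hP : ∀ t ∈ Set.Ioo a b, ∀ i j, HasDerivAt (fun s => P s i j)
      (((-((1 + ε) / (2 * ε))) • (Q t * P t ^ 2 + P t ^ 2 * Q t)
        + ((1 - ε) / ε) • (P t * Q t * P t)
        + σ ^ 2 • (1 : Matrix (Fin n) (Fin n) ℝ)) i j) t)
    (hQ : ∀ t ∈ Set.Ioo a b, ∀ i j, HasDerivAt (fun s => Q s i j)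
      ((((1 + ε) / (2 * ε)) • (Q t ^ 2 * P t + P t * Q t ^ 2)
        - ((1 - ε) / ε) • (Q t * P t * Q t)) i j) t) :
    (∀ t ∈ Set.Ioo a b, ∀ i j,
      HasDerivAt (fun s => (P s * Q s - Q s * P s) i j) 0 t) ∧
    ∀ s ∈ Set.Ioo a b, ∀ t ∈ Set.Ioo a b,
      (1 / (2 * ε)) • (P s * Q s - Q s * P s) = (1 / (2 * ε)) • (P t * Q t - Q t * P t) := by
  open scoped Matrix.Norms.Operator in
  obtain ⟨hderiv, hconst⟩ := stmt_17_general isOpen_Ioo isPreconnected_Ioo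
    (c := fun _ => (1 + ε) / (2 * ε)) (d := fun _ => (1 - ε) / ε) (r := fun _ => σ ^ 2)
    (fun t ht => hasDerivAt_matrix_iff.2 (hP t ht)) (fun t ht => hasDerivAt_matrix_iff.2 (hQ t ht))
  exact ⟨fun t ht => hasDerivAt_matrix_iff.1 (hderiv t ht),
    fun s hs t ht => congrArg _ (hconst s hs t ht)⟩
end
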